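/- Let w(x) := K(x)·exp(2·∫₀^x f₁(u) du), so that w = v'. Then for Lebesgue-almost every x ∈ ℝ, w is differentiable at x with w'(x) = 1 + 2·f₁(x)·w(x); equivalently, v satisfies the equation (1/2)·v''(x) − f₁(x)·v'(x) = 1/2 for almost every x ∈ ℝ. -/

import Mathlib

open MeasureTheory intervalIntegral

/-- With `K(y) = ∫₀^y exp(−2∫₀^z f₁) dz` and `w(x) = K(x)·exp(2∫₀^x f₁)` (so `w = v'`)
for a nonnegative locally integrable `f₁`, for Lebesgue-almost every `x` the function
`w` is differentiable at `x` with `w'(x) = 1 + 2·f₁(x)·w(x)`; i.e. `v` satisfies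
`(1/2)·v''(x) − f₁(x)·v'(x) = 1/2` for a.e. `x ∈ ℝ`. -/
theorem w_hasDerivAt_ae
    (f₁ : ℝ → ℝ) (hf₁ : ∀ u, 0 ≤ f₁ u)
    (hloc : LocallyIntegrable f₁ volume)
    (K w : ℝ → ℝ)
    (hK : ∀ y : ℝ, K y = ∫ z in (0:ℝ)..y, Real.exp (-2 * ∫ u in (0:ℝ)..z, f₁ u))
    (hw : ∀ x : ℝ, w x = K x * Real.exp (2 * ∫ u in (0:ℝ)..x, f₁ u)) :
    ∀ᵐ x ∂(volume : Measure ℝ), HasDerivAt w (1 + 2 * f₁ x * w x) x := by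
  have hInterv : ∀ a b : ℝ, IntervalIntegrable f₁ volume a b := fun a b =>
    (hloc.integrableOn_isCompact isCompact_uIcc).intervalIntegrable
  have hcont : Continuous fun z : ℝ => ∫ u in (0:ℝ)..z, f₁ u :=
    intervalIntegral.continuous_primitive hInterv 0
  have hcE : Continuous fun z : ℝ => Real.exp (-2 * ∫ u in (0:ℝ)..z, f₁ u) :=
    Real.continuous_exp.comp (continuous_const.mul hcont)
  have hwe : w = fun x => (∫ z in (0:ℝ)..x, Real.exp (-2 * ∫ u in (0:ℝ)..z, f₁ u)) *
      Real.exp (2 * ∫ u in (0:ℝ)..x, f₁ u) := by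
    funext x
    rw [hw, hK]
  filter_upwards [LocallyIntegrable.ae_hasDerivAt_integral hloc] with x hx
  have hF := hx 0
  have hKd := hcE.integral_hasStrictDerivAt 0 x |>.hasDerivAt
  have hE := (hF.const_mul 2).exp
  have hm := hKd.mul hE
  rw [hwe]
  refine hm.congr_deriv ?_
  rw [← Real.exp_add]
  have h0 : -2 * (∫ u in (0:ℝ)..x, f₁ u) + 2 * (∫ u in (0:ℝ)..x, f₁ u) = 0 := by ring
  rw [h0, Real.exp_zero]
  ring
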